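/- Fix t > 0, (x̂, â) ∈ ℝ² and points (x₁,a₁),…,(x_m,a_m) ∈ ℝ². Let K := { f : ℝ → ℝ 1-Lipschitz : p_{x̂,â}(t) ≤ f ≤ p_{x̂,â}(0) pointwise and f(x_j) ≤ a_j for all j }; say f ∈ K passes through j if f(x_j) = a_j. Then for any f₁,…,fₙ ∈ K: Σ_{i=1}^n I(fᵢ ∥ p_{x̂,â}(t)) ≥ inf { I(f ∥ p_{x̂,â}(t)) : f ∈ K and f passes through every j ∈ {1,…,m} that is passed through by at least one fᵢ }. Moreover the inequality is strict unless the open regions Sᵢ := { (x,y) ∈ ℝ² : p_{x̂,â}(t,x) < y < fᵢ(x) }, i = 1,…,n, are pairwise disjoint. -/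

import Mathlib

open MeasureTheory

/-- The (shifted) parabola `p(t,x)`: for `t > 0`, `p(t,x) = -t/2 - x²/(2t)` when `|x| ≤ t`
and `p(t,x) = -|x|` otherwise; also `p(0,x) = -|x|`. -/
noncomputable def parab (t x : ℝ) : ℝ :=
  if 0 < t ∧ |x| ≤ t then -t / 2 - x ^ 2 / (2 * t) else -|x|

/-- The shifted parabola `p_{x̂,â}(t,x) = p(t, x - x̂) + â`. -/
noncomputable def parabXA (xh ah t x : ℝ) : ℝ :=
  parab t (x - xh) + ah

/-- The Bernoulli entropy `H(u) = ((1+u)/2)·log(1+u) + ((1-u)/2)·log(1-u)`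
(with `0 · log 0 = 0`, as `Real.log 0 = 0`). -/
noncomputable def Hber (u : ℝ) : ℝ :=
  (1 + u) / 2 * Real.log (1 + u) + (1 - u) / 2 * Real.log (1 - u)

/-- The excess entropy `I(f ∥ p_{x̂,â}(t)) = ∫ ( H(f') - H(∂ₓ p_{x̂,â}(t,·)) )`. -/
noncomputable def excessEntropy (xh ah t : ℝ) (f : ℝ → ℝ) : ℝ :=
  ∫ y : ℝ, (Hber (deriv f y) - Hber (deriv (parabXA xh ah t) y))

/-- The admissible class `K`: 1-Lipschitz functions sandwiched between `p_{x̂,â}(t)` and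
`p_{x̂,â}(0)` and lying below all the points `(x_j, a_j)`. -/
def Kset (xh ah t : ℝ) (m : ℕ) (x a : Fin m → ℝ) : Set (ℝ → ℝ) :=
  {f | LipschitzWith 1 f ∧ (∀ y, parabXA xh ah t y ≤ f y ∧ f y ≤ parabXA xh ah 0 y) ∧
    ∀ j, f (x j) ≤ a j}

open Set Filter Topology

lemma mulLog_ineq (a b : ℝ) (ha : 0 ≤ a) (hb : 0 < b) :
    a - b ≤ a * Real.log a - a * Real.log b := by
  rcases ha.eq_or_lt with rfl | ha
  · simp; exact hb.le
  · have h := Real.log_le_sub_one_of_pos (div_pos hb ha)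
    rw [Real.log_div hb.ne' ha.ne'] at h
    have h2 := mul_le_mul_of_nonneg_left h ha.le
    have h3 : a * (b / a - 1) = b - a := by field_simp
    rw [h3] at h2
    linarith

lemma Hber_convex (u v : ℝ) (hu : -1 < u) (hu' : u < 1) (hv : -1 ≤ v) (hv' : v ≤ 1) :
    (Real.log (1 + u) - Real.log (1 - u)) / 2 * (v - u) ≤ Hber v - Hber u := by
  have h1 := mulLog_ineq (1 + v) (1 + u) (by linarith) (by linarith)
  have h2 := mulLog_ineq (1 - v) (1 - u) (by linarith) (by linarith)
  unfold Hber
  linarith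

lemma Hber_continuous : Continuous Hber := by
  have h1 : Continuous fun u : ℝ => (1 + u) * Real.log (1 + u) :=
    Real.continuous_mul_log.comp (by fun_prop : Continuous fun u : ℝ => 1 + u)
  have h2 : Continuous fun u : ℝ => (1 - u) * Real.log (1 - u) :=
    Real.continuous_mul_log.comp (by fun_prop : Continuous fun u : ℝ => 1 - u)
  have : Hber = fun u => ((1 + u) * Real.log (1 + u)) / 2 + ((1 - u) * Real.log (1 - u)) / 2 := by
    funext u; unfold Hber; ring
  rw [this]
  fun_prop

lemma parabXA_in {t : ℝ} (ht : 0 < t) (xh ah y : ℝ) (hy : |y - xh| ≤ t) :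
    parabXA xh ah t y = -t / 2 - (y - xh) ^ 2 / (2 * t) + ah := by
  simp [parabXA, parab, ht, hy]

lemma parabXA_zero (xh ah y : ℝ) : parabXA xh ah 0 y = -|y - xh| + ah := by
  simp [parabXA, parab]

lemma parabXA_out {t : ℝ} (ht : 0 < t) (xh ah y : ℝ) (hy : t ≤ |y - xh|) :
    parabXA xh ah t y = parabXA xh ah 0 y := by
  rw [parabXA_zero]
  rcases hy.eq_or_lt with h | h
  · rw [parabXA_in ht _ _ _ h.ge, ← sq_abs, ← h]; field_simp; ring
  · simp [parabXA, parab, ht, not_le.2 h]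

lemma parabXA_le_zero {t : ℝ} (ht : 0 < t) (xh ah y : ℝ) :
    parabXA xh ah t y ≤ parabXA xh ah 0 y := by
  rcases le_total t (|y - xh|) with h | h
  · exact (parabXA_out ht xh ah y h).le
  · rw [parabXA_zero, parabXA_in ht _ _ _ h, ← sq_abs]
    have : 0 ≤ (|y - xh| - t) ^ 2 / (2 * t) := by positivity
    have h2 : (|y - xh| - t) ^ 2 / (2 * t) = |y - xh| ^ 2 / (2 * t) + t / 2 - |y - xh| := by
      field_simp; ring
    linarith

lemma parabXA_zero_sub {t : ℝ} (ht : 0 < t) (xh ah y : ℝ) (h : |y - xh| ≤ t) :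
    parabXA xh ah 0 y - parabXA xh ah t y = (t - |y - xh|) ^ 2 / (2 * t) := by
  rw [parabXA_zero, parabXA_in ht _ _ _ h, ← sq_abs]
  field_simp; ring

lemma parab_aux {t : ℝ} (ht : 0 < t) (x y : ℝ) (h : |x| ≤ |y|) :
    parab t y ≤ parab t x ∧ parab t x - parab t y ≤ |y| - |x| := by
  unfold parab
  have hx := abs_nonneg x
  by_cases h1 : |y| ≤ t
  · have h2 : |x| ≤ t := h.trans h1
    simp only [ht, h1, h2, and_self, if_true]
    rw [← sq_abs x, ← sq_abs y]
    have e : |y| ^ 2 / (2 * t) - |x| ^ 2 / (2 * t) = (|y| - |x|) * ((|y| + |x|) / (2 * t)) := by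
      field_simp; ring
    have e1 : (|y| + |x|) / (2 * t) ≤ 1 := by rw [div_le_one (by positivity)]; linarith
    have e2 : 0 ≤ (|y| + |x|) / (2 * t) := by positivity
    have e3 := mul_nonneg (sub_nonneg.2 h) e2
    have e4 := mul_le_mul_of_nonneg_left e1 (sub_nonneg.2 h)
    constructor <;> linarith
  · by_cases h2 : |x| ≤ t
    · simp only [ht, h1, h2, and_self, if_true, and_false, if_false]
      rw [← sq_abs x]
      push Not at h1
      have e : t - |x| ^ 2 / (2 * t) - t / 2= (t - |x|) * ((t + |x|) / (2 * t)) := by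
        field_simp; ring
      have e1 : (t + |x|) / (2 * t) ≤ 1 := by rw [div_le_one (by positivity)]; linarith
      have e2 : 0 ≤ (t + |x|) / (2 * t) := by positivity
      have e3 := mul_nonneg (sub_nonneg.2 h2) e2
      have e4 := mul_le_mul_of_nonneg_left e1 (sub_nonneg.2 h2)
      constructor <;> linarith
    · simp only [h1, h2, and_false, if_false]
      constructor <;> linarith

lemma parabXA_lip {t : ℝ} (ht : 0 < t) (xh ah : ℝ) : LipschitzWith 1 (parabXA xh ah t) := by
  apply LipschitzWith.of_dist_le_mul
  intro x y
  simp only [NNReal.coe_one, one_mul, Real.dist_eq, parabXA]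
  have e : |(|x - xh| - |y - xh|)| ≤ |x - y| := by
    have := abs_abs_sub_abs_le_abs_sub (x - xh) (y - xh)
    simpa using this
  refine le_trans ?_ e
  rcases le_total |x - xh| |y - xh| with h | h
  · obtain ⟨h1, h2⟩ := parab_aux ht _ _ h
    rw [abs_of_nonneg (by linarith), abs_of_nonpos (by linarith)]; linarith
  · obtain ⟨h1, h2⟩ := parab_aux ht _ _ h
    rw [abs_of_nonpos (by linarith), abs_of_nonneg (by linarith)]; linarith

lemma parabXA_hasDeriv {t : ℝ} (ht : 0 < t) (xh ah y : ℝ) (h : |y - xh| < t) :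
    HasDerivAt (parabXA xh ah t) (-(y - xh) / t) y := by
  have h1 : HasDerivAt (fun y => -t / 2 - (y - xh) ^ 2 / (2 * t) + ah) (-(y - xh) / t) y := by
    have := ((((hasDerivAt_id y).sub_const xh).pow 2).div_const (2 * t)).const_sub (-t / 2)
      |>.add_const ah
    refine HasDerivAt.congr_deriv this ?_
    simp only [id]
    field_simp
    norm_num; ring
  refine h1.congr_of_eventuallyEq ?_
  have : ∀ᶠ z in 𝓝 y, |z - xh| < t :=
    (by fun_prop : Continuous fun z : ℝ => |z - xh|).continuousAt.eventually_lt
      continuousAt_const h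
  filter_upwards [this] with z hz
  exact parabXA_in ht _ _ _ hz.le

/-- sandwiched 1-Lipschitz profiles -/
def Sand (xh ah t : ℝ) (f : ℝ → ℝ) : Prop :=
  LipschitzWith 1 f ∧ ∀ y, parabXA xh ah t y ≤ f y ∧ f y ≤ parabXA xh ah 0 y

lemma deriv_mem {f : ℝ → ℝ} (hf : LipschitzWith 1 f) (y : ℝ) :
    -1 ≤ deriv f y ∧ deriv f y ≤ 1 := by
  have := norm_deriv_le_of_lipschitz (x₀ := y) hf
  rw [Real.norm_eq_abs] at this
  exact abs_le.1 (by simpa using this)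

lemma Sand.deriv_out {xh ah t : ℝ} (ht : 0 < t) {f : ℝ → ℝ} (hf : Sand xh ah t f) (y : ℝ)
    (h : t < |y - xh|) : deriv f y = deriv (parabXA xh ah t) y := by
  apply Filter.EventuallyEq.deriv_eq
  have : ∀ᶠ z in 𝓝 y, t < |z - xh| :=
    continuousAt_const.eventually_lt
      (by fun_prop : Continuous fun z : ℝ => |z - xh|).continuousAt h
  filter_upwards [this] with z hz
  have := hf.2 z
  rw [← parabXA_out ht _ _ _ hz.le] at this
  exact le_antisymm this.2 this.1

lemma Sand.integrand_out {xh ah t : ℝ} (ht : 0 < t) {f : ℝ → ℝ} (hf : Sand xh ah t f) (y : ℝ)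
    (h : y ∉ Icc (xh - t) (xh + t)) :
    Hber (deriv f y) - Hber (deriv (parabXA xh ah t) y) = 0 := by
  rw [hf.deriv_out ht y, sub_self]
  by_contra hc
  push Not at hc
  rw [abs_le] at hc
  exact h ⟨by linarith, by linarith⟩

lemma Sand.integrable {xh ah t : ℝ} (ht : 0 < t) {f : ℝ → ℝ} (hf : Sand xh ah t f) :
    Integrable (fun y => Hber (deriv f y) - Hber (deriv (parabXA xh ah t) y)) := by
  obtain ⟨C, hC⟩ := (isCompact_Icc (a := (-1 : ℝ)) (b := 1)).exists_bound_of_continuousOn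
    Hber_continuous.continuousOn
  have hm : Measurable (fun y => Hber (deriv f y) - Hber (deriv (parabXA xh ah t) y)) :=
    (Hber_continuous.measurable.comp (measurable_deriv f)).sub
      (Hber_continuous.measurable.comp (measurable_deriv _))
  have hon : IntegrableOn (fun y => Hber (deriv f y) - Hber (deriv (parabXA xh ah t) y))
      (Icc (xh - t) (xh + t)) := by
    apply Measure.integrableOn_of_bounded (M := C + C)
    · simp
    · exact hm.aestronglyMeasurable
    · refine Eventually.of_forall fun y => ?_
      refine (norm_sub_le _ _).trans (add_le_add (hC _ ?_) (hC _ ?_))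
      · exact deriv_mem hf.1 y
      · exact deriv_mem (parabXA_lip ht xh ah) y
  rw [← integrableOn_univ]
  refine hon.of_forall_sdiff_eq_zero MeasurableSet.univ ?_
  intro y hy
  exact hf.integrand_out ht y hy.2

lemma Sand.excess_eq {xh ah t : ℝ} (ht : 0 < t) {f : ℝ → ℝ} (hf : Sand xh ah t f) :
    excessEntropy xh ah t f = ∫ y in (xh - t)..(xh + t),
      (Hber (deriv f y) - Hber (deriv (parabXA xh ah t) y)) := by
  rw [intervalIntegral.integral_of_le (by linarith), ← integral_Icc_eq_integral_Ioc, excessEntropy]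
  symm
  apply setIntegral_eq_integral_of_forall_compl_eq_zero
  exact fun y hy => hf.integrand_out ht y hy

lemma boundary_est {t s : ℝ} (hs : 0 < s) (hst : s < t) :
    0 ≤ (Real.log (t + s) - Real.log (t - s)) / 2 ∧
    (Real.log (t + s) - Real.log (t - s)) / 2 * ((t - s) ^ 2 / t) ≤ t - s := by
  have h1 : 0 < t - s := by linarith
  have h2 : 0 < t + s := by linarith
  have ht : 0 < t := by linarith
  constructor
  · have := Real.log_le_log h1 (by linarith : t - s ≤ t + s)
    linarith
  · have h := Real.log_le_sub_one_of_pos (div_pos h2 h1)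
    rw [Real.log_div h2.ne' h1.ne'] at h
    have h3 : (t + s) / (t - s) - 1 = 2 * (s / (t - s)) := by field_simp; ring
    rw [h3] at h
    have h4 : (Real.log (t + s) - Real.log (t - s)) / 2 ≤ s / (t - s) := by linarith
    calc _ ≤ s / (t - s) * ((t - s) ^ 2 / t) := by gcongr
      _ = (s / t) * (t - s) := by field_simp
      _ ≤ 1 * (t - s) := by
        gcongr
        rw [div_le_one ht]; exact hst.le
      _ = _ := one_mul _

lemma phi_deriv {t xh y : ℝ} (h1 : 0 < t - (y - xh)) (h2 : 0 < t + (y - xh)) :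
    HasDerivAt (fun y => (Real.log (t - (y - xh)) - Real.log (t + (y - xh))) / 2)
      (-(t / ((t - (y - xh)) * (t + (y - xh))))) y := by
  have a1 := (((hasDerivAt_id y).sub_const xh).const_sub t).log h1.ne'
  have a2 := (((hasDerivAt_id y).sub_const xh).const_add t).log h2.ne'
  refine HasDerivAt.congr_deriv ((a1.sub a2).div_const 2) ?_
  simp only [id]
  field_simp
  ring

lemma Sand.est {xh ah t : ℝ} (ht : 0 < t) {f : ℝ → ℝ} (hf : Sand xh ah t f) (s : ℝ)
    (hs : 0 < s) (hst : s < t) :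
    1 / t * (∫ y in (xh - s)..(xh + s), (f y - parabXA xh ah t y)) - (t - s) ≤
      ∫ y in (xh - s)..(xh + s), (Hber (deriv f y) - Hber (deriv (parabXA xh ah t) y)) := by
  set P := parabXA xh ah t with hP
  have hPl : LipschitzWith 1 P := parabXA_lip ht xh ah
  set φ : ℝ → ℝ := fun y => (Real.log (t - (y - xh)) - Real.log (t + (y - xh))) / 2 with hφ
  have hle : xh - s ≤ xh + s := by linarith
  have hmem : ∀ y ∈ Icc (xh - s) (xh + s), 0 < t - (y - xh) ∧ 0 < t + (y - xh) := by
    intro y hy; constructor <;> linarith [hy.1, hy.2]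
  have hwl : LipschitzWith (1 + 1) (fun y => f y - P y) := hf.1.sub hPl
  have hwc : Continuous (fun y => f y - P y) := hwl.continuous
  have hwac : AbsolutelyContinuousOnInterval (fun y => f y - P y) (xh - s) (xh + s) :=
    hwl.lipschitzOnWith.absolutelyContinuousOnInterval
  have hφc : ContDiffOn ℝ 1 φ (Icc (xh - s) (xh + s)) := by
    apply ContDiffOn.div_const
    apply ContDiffOn.sub
    · exact ContDiffOn.log (by fun_prop) (fun y hy => (hmem y hy).1.ne')
    · exact ContDiffOn.log (by fun_prop) (fun y hy => (hmem y hy).2.ne')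
  obtain ⟨K, hK⟩ := hφc.exists_lipschitzOnWith one_ne_zero (convex_Icc _ _) isCompact_Icc
  have hφac : AbsolutelyContinuousOnInterval φ (xh - s) (xh + s) := by
    apply LipschitzOnWith.absolutelyContinuousOnInterval (K := K)
    rwa [uIcc_of_le hle]
  have hparts := hφac.integral_mul_deriv_eq_deriv_mul hwac
  -- convexity
  have h1 : ∫ y in (xh - s)..(xh + s), φ y * deriv (fun y => f y - P y) y ≤
      ∫ y in (xh - s)..(xh + s), (Hber (deriv f y) - Hber (deriv P y)) := by
    apply intervalIntegral.integral_mono_ae_restrict hle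
    · exact hwac.intervalIntegrable_deriv.continuousOn_mul hφac.continuousOn
    · exact (hf.integrable ht).intervalIntegrable
    · filter_upwards [ae_restrict_of_ae hf.1.ae_differentiableAt_real,
        ae_restrict_mem measurableSet_Icc] with y hy hyI
      have hPd : HasDerivAt P (-(y - xh) / t) y :=
        parabXA_hasDeriv ht _ _ _ (by rw [abs_lt]; constructor <;> linarith [hyI.1, hyI.2])
      have hd := (hy.hasDerivAt.sub hPd).deriv
      have hd' : deriv (fun y => f y - P y) y = deriv f y - -(y - xh) / t := hd
      rw [hd', hPd.deriv]
      obtain ⟨m1, m2⟩ := hmem y hyI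
      have e1 : 1 + -(y - xh) / t = (t - (y - xh)) / t := by field_simp; ring
      have e2 : 1 - -(y - xh) / t = (t + (y - xh)) / t := by field_simp; ring
      have p1 : 0 < (t - (y - xh)) / t := by positivity
      have p2 : 0 < (t + (y - xh)) / t := by positivity
      have := Hber_convex (-(y - xh) / t) (deriv f y) (by linarith) (by linarith)
        (deriv_mem hf.1 y).1 (deriv_mem hf.1 y).2
      rw [e1, e2, Real.log_div m1.ne' ht.ne', Real.log_div m2.ne' ht.ne'] at this
      convert this using 2
      simp only [hφ]; ring
  -- derivative of phi
  have h2 : 1 / t * (∫ y in (xh - s)..(xh + s), (f y - P y)) ≤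
      - ∫ y in (xh - s)..(xh + s), deriv φ y * (f y - P y) := by
    rw [← intervalIntegral.integral_const_mul, ← intervalIntegral.integral_neg]
    apply intervalIntegral.integral_mono_on hle
    · exact (hwc.const_mul _).intervalIntegrable _ _
    · exact (hφac.intervalIntegrable_deriv.mul_continuousOn hwac.continuousOn).neg
    · intro y hyI
      obtain ⟨m1, m2⟩ := hmem y hyI
      rw [(phi_deriv m1 m2).deriv, neg_mul, neg_neg]
      apply mul_le_mul_of_nonneg_right _ (sub_nonneg.2 (hf.2 y).1)
      rw [div_le_div_iff₀ ht (by positivity)]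
      nlinarith [sq_nonneg (y - xh)]
  have hw : ∀ y, |y - xh| = s → f y - P y ≤ (t - s) ^ 2 / (2 * t) := by
    intro y hy
    have := parabXA_zero_sub ht xh ah y (by linarith)
    rw [hy] at this
    linarith [(hf.2 y).2]
  obtain ⟨b1, b2⟩ := boundary_est hs hst
  have w1 := hw (xh + s) (by simp [abs_of_pos hs])
  have w2 := hw (xh - s) (by simp [abs_of_pos hs])
  have p1 : φ (xh + s) = -((Real.log (t + s) - Real.log (t - s)) / 2) := by
    simp only [hφ]; ring_nf
  have p2 : φ (xh - s) = ((Real.log (t + s) - Real.log (t - s)) / 2) := by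
    simp only [hφ]; ring_nf
  rw [p1, p2] at hparts
  have w3 := mul_le_mul_of_nonneg_left (add_le_add w1 w2) b1
  have e : (t - s) ^ 2 / (2 * t) + (t - s) ^ 2 / (2 * t) = (t - s) ^ 2 / t := by
    field_simp; ring
  rw [e] at w3
  linarith

lemma prim_cont (xh : ℝ) (g : ℝ → ℝ) (hg : ∀ a b, IntervalIntegrable g volume a b) :
    Continuous fun s => ∫ y in (xh - s)..(xh + s), g y := by
  have h := intervalIntegral.continuous_primitive hg xh
  have e : (fun s => ∫ y in (xh - s)..(xh + s), g y) =
      fun s => (∫ y in xh..(xh + s), g y) - ∫ y in xh..(xh - s), g y := by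
    funext s
    exact (intervalIntegral.integral_interval_sub_left (hg _ _) (hg _ _)).symm
  rw [e]
  exact (h.comp (by fun_prop : Continuous fun s : ℝ => xh + s)).sub
    (h.comp (by fun_prop : Continuous fun s : ℝ => xh - s))

lemma Sand.excess_ge {xh ah t : ℝ} (ht : 0 < t) {f : ℝ → ℝ} (hf : Sand xh ah t f) :
    1 / t * (∫ y in (xh - t)..(xh + t), (f y - parabXA xh ah t y)) ≤ excessEntropy xh ah t f := by
  rw [hf.excess_eq ht]
  have hwc : Continuous (fun y => f y - parabXA xh ah t y) :=
    hf.1.continuous.sub (parabXA_lip ht xh ah).continuous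
  have c1 := prim_cont xh _ (fun a b => hwc.intervalIntegrable (μ := volume) a b)
  have c2 := prim_cont xh _ (fun a b => (hf.integrable ht).intervalIntegrable (a := a) (b := b))
  have c3 : Continuous fun s => 1 / t * (∫ y in (xh - s)..(xh + s), (f y - parabXA xh ah t y))
      - (t - s) := by fun_prop
  have t3 := (c3.tendsto t).mono_left (nhdsWithin_le_nhds (s := Iio t))
  have t2 := (c2.tendsto t).mono_left (nhdsWithin_le_nhds (s := Iio t))
  simp only [sub_self, sub_zero] at t3
  refine le_of_tendsto_of_tendsto t3 t2 ?_
  filter_upwards [Ioo_mem_nhdsLT ht] with s hs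
  exact hf.est ht s hs.1 hs.2

lemma Sand.excess_nonneg {xh ah t : ℝ} (ht : 0 < t) {f : ℝ → ℝ} (hf : Sand xh ah t f) :
    0 ≤ excessEntropy xh ah t f := by
  refine le_trans ?_ (hf.excess_ge ht)
  apply mul_nonneg (by positivity)
  apply intervalIntegral.integral_nonneg (by linarith)
  intro y _
  exact sub_nonneg.2 (hf.2 y).1

lemma Sand.excess_pos {xh ah t : ℝ} (ht : 0 < t) {f : ℝ → ℝ} (hf : Sand xh ah t f) (y : ℝ)
    (hy : parabXA xh ah t y < f y) : 0 < excessEntropy xh ah t f := by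
  refine lt_of_lt_of_le ?_ (hf.excess_ge ht)
  apply mul_pos (by positivity)
  apply intervalIntegral.integral_pos (by linarith)
  · exact (hf.1.continuous.sub (parabXA_lip ht xh ah).continuous).continuousOn
  · intro z _
    exact sub_nonneg.2 (hf.2 z).1
  · refine ⟨y, ?_, sub_pos.2 hy⟩
    by_contra hc
    have h : t ≤ |y - xh| := by
      by_contra h'
      push Not at h'
      rw [abs_lt] at h'
      exact hc ⟨by linarith, by linarith⟩
    have := parabXA_out ht xh ah y h
    linarith [(hf.2 y).2]

lemma Sand.sup {xh ah t : ℝ} {f g : ℝ → ℝ} (hf : Sand xh ah t f) (hg : Sand xh ah t g) :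
    Sand xh ah t (fun y => max (f y) (g y)) :=
  ⟨by simpa using hf.1.max hg.1, fun y => ⟨le_max_of_le_left (hf.2 y).1, max_le (hf.2 y).2 (hg.2 y).2⟩⟩

lemma Sand.inf {xh ah t : ℝ} {f g : ℝ → ℝ} (hf : Sand xh ah t f) (hg : Sand xh ah t g) :
    Sand xh ah t (fun y => min (f y) (g y)) :=
  ⟨by simpa using hf.1.min hg.1, fun y => ⟨le_min (hf.2 y).1 (hg.2 y).1, min_le_of_left_le (hf.2 y).2⟩⟩

lemma deriv_le_touch {f g : ℝ → ℝ} {y : ℝ} (hf : DifferentiableAt ℝ f y)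
    (hg : DifferentiableAt ℝ g y) (hle : ∀ z, f z ≤ g z) (he : f y = g y) :
    deriv f y = deriv g y := by
  have h : IsLocalMin (fun z => g z - f z) y :=
    Eventually.of_forall fun z => by simp [he, hle z]
  have := h.hasDerivAt_eq_zero (hg.hasDerivAt.sub hf.hasDerivAt)
  linarith

lemma deriv_max_min_lt {f g : ℝ → ℝ} {y : ℝ} (hf : Continuous f) (hg : Continuous g)
    (h : f y < g y) : deriv (fun y => max (f y) (g y)) y = deriv g y ∧
      deriv (fun y => min (f y) (g y)) y = deriv f y := by
  have : ∀ᶠ z in 𝓝 y, f z < g z := hf.continuousAt.eventually_lt hg.continuousAt h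
  constructor <;> apply Filter.EventuallyEq.deriv_eq <;> filter_upwards [this] with z hz
  · exact max_eq_right hz.le
  · exact min_eq_left hz.le

lemma Sand.max_add_min {xh ah t : ℝ} (ht : 0 < t) {f g : ℝ → ℝ} (hf : Sand xh ah t f)
    (hg : Sand xh ah t g) :
    excessEntropy xh ah t (fun y => max (f y) (g y)) +
      excessEntropy xh ah t (fun y => min (f y) (g y)) =
    excessEntropy xh ah t f + excessEntropy xh ah t g := by
  unfold excessEntropy
  rw [← integral_add ((hf.sup hg).integrable ht) ((hf.inf hg).integrable ht),
    ← integral_add (hf.integrable ht) (hg.integrable ht)]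
  apply integral_congr_ae
  filter_upwards [hf.1.ae_differentiableAt_real, hg.1.ae_differentiableAt_real,
    (hf.sup hg).1.ae_differentiableAt_real, (hf.inf hg).1.ae_differentiableAt_real]
    with y h1 h2 h3 h4
  rcases lt_trichotomy (f y) (g y) with h | h | h
  · obtain ⟨e1, e2⟩ := deriv_max_min_lt hf.1.continuous hg.1.continuous h
    rw [e1, e2]; ring
  · have e1 := deriv_le_touch h1 h3 (fun z => le_max_left _ _) (by simp [h])
    have e2 := deriv_le_touch h2 h3 (fun z => le_max_right _ _) (by simp [h])
    have e3 := deriv_le_touch h4 h1 (fun z => min_le_left _ _) (by simp [h])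
    rw [e3, ← e1, ← e1.trans e2.symm]
  · obtain ⟨e1, e2⟩ := deriv_max_min_lt hg.1.continuous hf.1.continuous h
    simp only [max_comm (g _), min_comm (g _)] at e1 e2
    rw [e1, e2]

lemma Kset_iff {xh ah t : ℝ} {m : ℕ} {x a : Fin m → ℝ} {f : ℝ → ℝ} :
    f ∈ Kset xh ah t m x a ↔ Sand xh ah t f ∧ ∀ j, f (x j) ≤ a j := by
  simp only [Kset, Sand, mem_ofPred_eq, and_assoc]

lemma combine {xh ah t : ℝ} (ht : 0 < t) {m : ℕ} {x a : Fin m → ℝ} {n : ℕ}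
    {f : Fin n → ℝ → ℝ} (hf : ∀ i, f i ∈ Kset xh ah t m x a) (g₀ : ℝ → ℝ)
    (hg₀ : g₀ ∈ Kset xh ah t m x a) (s : Finset (Fin n)) :
    ∃ g ∈ Kset xh ah t m x a, (∀ y, g₀ y ≤ g y) ∧ (∀ i ∈ s, ∀ y, f i y ≤ g y) ∧
      excessEntropy xh ah t g ≤ excessEntropy xh ah t g₀ + ∑ i ∈ s, excessEntropy xh ah t (f i) := by
  induction s using Finset.induction_on with
  | empty => exact ⟨g₀, hg₀, fun _ => le_rfl, by simp, by simp⟩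
  | insert i s hi ih =>
    obtain ⟨g, hg, h1, h2, h3⟩ := ih
    have hgS := Kset_iff.1 hg
    have hfS := Kset_iff.1 (hf i)
    refine ⟨fun y => max (f i y) (g y), Kset_iff.2 ⟨hfS.1.sup hgS.1, fun j =>
      max_le (hfS.2 j) (hgS.2 j)⟩, fun y => le_max_of_le_right (h1 y), ?_, ?_⟩
    · intro k hk y
      rcases Finset.mem_insert.1 hk with rfl | hk
      · exact le_max_left _ _
      · exact le_max_of_le_right (h2 k hk y)
    · rw [Finset.sum_insert hi]
      have e := hfS.1.max_add_min ht hgS.1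
      have := (hfS.1.inf hgS.1).excess_nonneg ht
      linarith

/-- Lemma 6.3 (l.repeat): several admissible profiles anchored at the same wedge can be
combined into a single admissible profile passing through all their anchor points without
increasing the total excess entropy; the inequality is strict unless the open regions
between the profiles and the parabola are pairwise disjoint. -/
theorem excessEntropy_combination
    (t : ℝ) (ht : 0 < t) (xh ah : ℝ) (m : ℕ) (x a : Fin m → ℝ)
    (n : ℕ) (f : Fin n → ℝ → ℝ) (hf : ∀ i, f i ∈ Kset xh ah t m x a) :
    (sInf {r : ℝ | ∃ g ∈ Kset xh ah t m x a,
        (∀ j, (∃ i, f i (x j) = a j) → g (x j) = a j) ∧ r = excessEntropy xh ah t g}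
      ≤ ∑ i, excessEntropy xh ah t (f i)) ∧
    ((¬ Pairwise fun i i' =>
        Disjoint {p : ℝ × ℝ | parabXA xh ah t p.1 < p.2 ∧ p.2 < f i p.1}
          {p : ℝ × ℝ | parabXA xh ah t p.1 < p.2 ∧ p.2 < f i' p.1}) →
      sInf {r : ℝ | ∃ g ∈ Kset xh ah t m x a,
          (∀ j, (∃ i, f i (x j) = a j) → g (x j) = a j) ∧ r = excessEntropy xh ah t g}
        < ∑ i, excessEntropy xh ah t (f i)) := by
  have hbdd : BddBelow {r : ℝ | ∃ g ∈ Kset xh ah t m x a,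
      (∀ j, (∃ i, f i (x j) = a j) → g (x j) = a j) ∧ r = excessEntropy xh ah t g} := by
    refine ⟨0, ?_⟩
    rintro r ⟨g, hg, -, rfl⟩
    exact (Kset_iff.1 hg).1.excess_nonneg ht
  have hle : ∀ g ∈ Kset xh ah t m x a, (∀ i y, f i y ≤ g y) →
      sInf {r : ℝ | ∃ g ∈ Kset xh ah t m x a,
        (∀ j, (∃ i, f i (x j) = a j) → g (x j) = a j) ∧ r = excessEntropy xh ah t g} ≤
      excessEntropy xh ah t g := by
    intro g hg hfg
    refine csInf_le hbdd ⟨g, hg, ?_, rfl⟩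
    rintro j ⟨i, hi⟩
    exact le_antisymm ((Kset_iff.1 hg).2 j) (hi ▸ hfg i (x j))
  constructor
  · by_cases hne : ∃ g, g ∈ Kset xh ah t m x a
    · obtain ⟨g₁, hg₁⟩ := hne
      have hg₁S := Kset_iff.1 hg₁
      have hPK : parabXA xh ah t ∈ Kset xh ah t m x a :=
        Kset_iff.2 ⟨⟨parabXA_lip ht xh ah, fun y => ⟨le_rfl, parabXA_le_zero ht xh ah y⟩⟩,
          fun j => (hg₁S.1.2 (x j)).1.trans (hg₁S.2 j)⟩
      obtain ⟨g, hg, -, h2, h3⟩ := combine ht hf _ hPK Finset.univ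
      have h0 : excessEntropy xh ah t (parabXA xh ah t) = 0 := by simp [excessEntropy]
      have := hle g hg (fun i => h2 i (Finset.mem_univ i))
      linarith
    · have he : {r : ℝ | ∃ g ∈ Kset xh ah t m x a,
          (∀ j, (∃ i, f i (x j) = a j) → g (x j) = a j) ∧ r = excessEntropy xh ah t g} = ∅ := by
        ext r
        simp only [mem_ofPred_eq, mem_empty_iff_false, iff_false]
        rintro ⟨g, hg, -⟩
        exact hne ⟨g, hg⟩
      rw [he, Real.sInf_empty]
      exact Finset.sum_nonneg fun i _ => (Kset_iff.1 (hf i)).1.excess_nonneg ht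
  · intro hnp
    simp only [Pairwise, not_forall] at hnp
    obtain ⟨i, i', hii, hd⟩ := hnp
    rw [Set.not_disjoint_iff] at hd
    obtain ⟨p, hp1, hp2⟩ := hd
    have hi := Kset_iff.1 (hf i)
    have hi' := Kset_iff.1 (hf i')
    have hpos := (hi.1.inf hi'.1).excess_pos ht p.1 (lt_min (hp1.1.trans hp1.2) (hp2.1.trans hp2.2))
    have e := hi.1.max_add_min ht hi'.1
    have hmax : (fun y => max (f i y) (f i' y)) ∈ Kset xh ah t m x a :=
      Kset_iff.2 ⟨hi.1.sup hi'.1, fun j => max_le (hi.2 j) (hi'.2 j)⟩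
    obtain ⟨g, hg, h1, h2, h3⟩ := combine ht hf _ hmax ((Finset.univ.erase i).erase i')
    have hs1 := Finset.add_sum_erase Finset.univ (fun i => excessEntropy xh ah t (f i))
      (Finset.mem_univ i)
    have hs2 := Finset.add_sum_erase (Finset.univ.erase i) (fun i => excessEntropy xh ah t (f i))
      (Finset.mem_erase.2 ⟨hii.symm, Finset.mem_univ i'⟩)
    have := hle g hg (fun k y => by
      by_cases hk : k = i
      · subst hk; exact (le_max_left _ _).trans (h1 y)
      by_cases hk' : k = i'
      · subst hk'; exact (le_max_right _ _).trans (h1 y)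
      exact h2 k (by simp [hk, hk']) y)
    linarith
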